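/- arXiv:quant-ph/0406162 — 2 statements merged into one kernel-verified Lean document; each statement's English description precedes it below -/
import Mathlib

section
/- Let ρ^{ABC} be a state of a tripartite quantum system on finite-dimensional Hilbert spaces with I(A;C|B) = 0. Then S(AC) ≥ S(C), i.e. the conditional entropy S(A|C) is nonnegative. -/
/-!
Every positive semidefinite `ρ` on `ABC` satisfies `2 (S(AC) - S(C)) + I(A;C|B) ≥ 0`: this is the
sum of strong subadditivity with pivot `C`, `S(ABC) + S(C) ≤ S(AC) + S(BC)`, and weak monotonicity,
`S(B) + S(C) ≤ S(AB) + S(AC)`. The latter is strong subadditivity for the marginal on `ABD` of a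
purification of `ρ` by a system `D`, since complementary marginals of a pure state have the same
nonzero spectrum.

Strong subadditivity is monotonicity of the relative entropy `D(ρ‖σ) = Tr ρ (log ρ - log σ)` under
tracing out `C`, for the pair `ρ_ABC`, `1 ⊗ ρ_BC`; singular `ρ` are limits of `ρ + ε`.
For invertible `ρ` and `σ` with eigenpairs `(p i, u i)` and `(q j, v j)`, put
`F_t(ρ, σ) = ∑ i j, |⟨u i, v j⟩|² p i ² / (q j + t p i)`. Completing squares,
`F_t(ρ, σ) = sup_X (2 Re Tr ρX - Tr σXX* - t Tr ρX*X)`. For the marginals of `ρ` and `σ` the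
supremum runs only over `X` of the form `1 ⊗ Y`, so `F_t` decreases under partial traces.
Since `∫₀ᵀ F_t(ρ, σ) dt = log T · Tr ρ + D(ρ‖σ) + o(1)` as `T → ∞`, so does the relative entropy.
-/

open scoped BigOperators ComplexOrder

/-- Von Neumann entropy (base 2) of a matrix: for a Hermitian matrix, the Shannon
entropy of its eigenvalues; junk value `0` for non-Hermitian matrices. -/
noncomputable def vNEntropy {n : Type*} [Fintype n] [DecidableEq n] (M : Matrix n n ℂ) : ℝ :=
  if h : M.IsHermitian then -∑ i, (h.eigenvalues i) * Real.logb 2 (h.eigenvalues i) else 0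

/-- A density matrix: positive semidefinite with trace one. -/
def IsState {n : Type*} [Fintype n] [DecidableEq n] (M : Matrix n n ℂ) : Prop :=
  M.PosSemidef ∧ M.trace = 1

section Tri

variable {A B C : Type*} [Fintype A] [DecidableEq A] [Fintype B] [DecidableEq B]
  [Fintype C] [DecidableEq C]
  (ρ : Matrix (A × B × C) (A × B × C) ℂ)

/-- The reduced state on `A ⊗ C` of a tripartite state. -/
noncomputable def redAC : Matrix (A × C) (A × C) ℂ :=
  Matrix.of fun p q : A × C => ∑ b, ρ (p.1, b, p.2) (q.1, b, q.2)

/-- Entropies of the marginals of a tripartite state. -/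
noncomputable def S3A : ℝ :=
  vNEntropy (Matrix.of fun a a' : A => ∑ b, ∑ c, ρ (a, b, c) (a', b, c))
noncomputable def S3B : ℝ :=
  vNEntropy (Matrix.of fun b b' : B => ∑ a, ∑ c, ρ (a, b, c) (a, b', c))
noncomputable def S3C : ℝ :=
  vNEntropy (Matrix.of fun c c' : C => ∑ a, ∑ b, ρ (a, b, c) (a, b, c'))
noncomputable def S3AB : ℝ :=
  vNEntropy (Matrix.of fun p q : A × B => ∑ c, ρ (p.1, p.2, c) (q.1, q.2, c))
noncomputable def S3AC : ℝ := vNEntropy (redAC ρ)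
noncomputable def S3BC : ℝ :=
  vNEntropy (Matrix.of fun p q : B × C => ∑ a, ρ (a, p.1, p.2) (a, q.1, q.2))
noncomputable def S3ABC : ℝ := vNEntropy ρ

end Tri

open Matrix

section EigenMatrix

variable {n : Type*} [Fintype n] [DecidableEq n] {ρ σ τ : Matrix n n ℂ}

/-- The matrix of the operator `X` with respect to the chosen orthonormal eigenbases of `σ` (for
the domain, indexing columns) and of `ρ` (for the codomain, indexing rows). For `X = 1` its entries
are the inner products of the eigenvectors of `ρ` with those of `σ`. -/
noncomputable def eigenMatrix (hρ : ρ.IsHermitian) (hσ : σ.IsHermitian) (X : Matrix n n ℂ) :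
    Matrix n n ℂ :=
  star (hρ.eigenvectorUnitary : Matrix n n ℂ) * X * hσ.eigenvectorUnitary

variable (hρ : ρ.IsHermitian) (hσ : σ.IsHermitian) (hτ : τ.IsHermitian)

lemma eigenMatrix_mul (X Y : Matrix n n ℂ) :
    eigenMatrix hρ hσ (X * Y) = eigenMatrix hρ hτ X * eigenMatrix hτ hσ Y :=
  calc eigenMatrix hρ hσ (X * Y)
      = star (hρ.eigenvectorUnitary : Matrix n n ℂ) * X * (hτ.eigenvectorUnitary *
          star (hτ.eigenvectorUnitary : Matrix n n ℂ)) * Y * hσ.eigenvectorUnitary := by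
        rw [Unitary.mul_star_self_of_mem hτ.eigenvectorUnitary.2, mul_one, eigenMatrix, ← mul_assoc]
    _ = eigenMatrix hρ hτ X * eigenMatrix hτ hσ Y := by simp only [eigenMatrix, mul_assoc]

lemma conjTranspose_eigenMatrix (X : Matrix n n ℂ) :
    (eigenMatrix hρ hσ X)ᴴ = eigenMatrix hσ hρ Xᴴ := by
  simp only [eigenMatrix, ← star_eq_conjTranspose, star_mul, star_star, mul_assoc]

lemma trace_eigenMatrix (X : Matrix n n ℂ) : (eigenMatrix hρ hρ X).trace = X.trace := by
  rw [eigenMatrix, trace_mul_cycle, Unitary.mul_star_self_of_mem hρ.eigenvectorUnitary.2, one_mul]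

lemma eigenMatrix_surjective : Function.Surjective (eigenMatrix hρ hσ) := by
  intro Y
  refine ⟨hρ.eigenvectorUnitary * Y * star (hσ.eigenvectorUnitary : Matrix n n ℂ), ?_⟩
  rw [eigenMatrix, mul_assoc, mul_assoc _ _ (hσ.eigenvectorUnitary : Matrix n n ℂ),
    Unitary.coe_star_mul_self, mul_one, ← mul_assoc, Unitary.coe_star_mul_self, one_mul]

lemma eigenMatrix_cfc (f : ℝ → ℝ) :
    eigenMatrix hρ hρ (cfc f ρ) = diagonal fun i => (f (hρ.eigenvalues i) : ℂ) := by
  rw [hρ.cfc_eq, IsHermitian.cfc, eigenMatrix, ← Unitary.conjStarAlgAut_star_apply (S := ℂ),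
    ← Unitary.conjStarAlgAut_mul_apply, Unitary.star_mul_self, map_one]
  rfl

end EigenMatrix

section FunctionalCalculus

variable {m n : Type*} [Fintype m] [DecidableEq m] [Fintype n] [DecidableEq n]
  {ρ : Matrix n n ℂ}

lemma trace_cfc_mul (hρ : ρ.IsHermitian) (f : ℝ → ℝ) (X : Matrix n n ℂ) :
    (cfc f ρ * X).trace = ∑ i, (f (hρ.eigenvalues i) : ℂ) * eigenMatrix hρ hρ X i i := by
  rw [← trace_eigenMatrix hρ, eigenMatrix_mul hρ hρ hρ, eigenMatrix_cfc, trace]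
  simp only [diag_apply, diagonal_mul]

lemma trace_mul_eq_sum_eigenvalues (hρ : ρ.IsHermitian) (X : Matrix n n ℂ) :
    (ρ * X).trace = ∑ i, (hρ.eigenvalues i : ℂ) * eigenMatrix hρ hρ X i i := by
  simpa only [cfc_id' ℝ ρ hρ.isSelfAdjoint] using trace_cfc_mul hρ (fun p => p) X

lemma trace_cfc (hρ : ρ.IsHermitian) (f : ℝ → ℝ) :
    (cfc f ρ).trace = ∑ i, (f (hρ.eigenvalues i) : ℂ) := by
  rw [← trace_eigenMatrix hρ, eigenMatrix_cfc, trace_diagonal]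

lemma trace_cfc_eq_sum_roots_charpoly (hρ : ρ.IsHermitian) (f : ℝ → ℝ) :
    (cfc f ρ).trace = (ρ.charpoly.roots.map fun z => (f z.re : ℂ)).sum := by
  simp [trace_cfc hρ, hρ.roots_charpoly_eq_eigenvalues]

lemma trace_cfc_transpose (hρ : ρ.IsHermitian) (f : ℝ → ℝ) :
    (cfc f ρᵀ).trace = (cfc f ρ).trace := by
  rw [trace_cfc_eq_sum_roots_charpoly hρ, trace_cfc_eq_sum_roots_charpoly hρ.transpose,
    charpoly_transpose]

lemma trace_cfc_submatrix (e : m ≃ n) (hρ : ρ.IsHermitian) (f : ℝ → ℝ) :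
    (cfc f (ρ.submatrix e e)).trace = (cfc f ρ).trace := by
  have hchar : (ρ.submatrix e e).charpoly = ρ.charpoly := charpoly_reindex e.symm ρ
  rw [trace_cfc_eq_sum_roots_charpoly hρ, trace_cfc_eq_sum_roots_charpoly (hρ.submatrix e), hchar]

lemma sum_map_roots_X_pow_mul {R S : Type*} [CommRing R] [IsDomain R] [AddCommMonoid S]
    {g : R → S} (hg : g 0 = 0) (k : ℕ) {P : Polynomial R} (hP : P ≠ 0) :
    ((Polynomial.X ^ k * P).roots.map g).sum = (P.roots.map g).sum := by
  rw [Polynomial.roots_mul (mul_ne_zero (pow_ne_zero k Polynomial.X_ne_zero) hP)]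
  simp [Multiset.map_nsmul, Multiset.sum_nsmul, hg]

lemma trace_cfc_mul_conjTranspose_self {f : ℝ → ℝ} (hf : f 0 = 0) (N : Matrix m n ℂ) :
    (cfc f (N * Nᴴ)).trace = (cfc f (Nᴴ * N)).trace := by
  let g (z : ℂ) : ℂ := f z.re
  have hg : g 0 = 0 := by simp [g, hf]
  rw [trace_cfc_eq_sum_roots_charpoly (isHermitian_mul_conjTranspose_self N),
    trace_cfc_eq_sum_roots_charpoly (isHermitian_conjTranspose_mul_self N),
    ← sum_map_roots_X_pow_mul hg (Fintype.card n) (charpoly_monic _).ne_zero,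
    charpoly_mul_comm',
    sum_map_roots_X_pow_mul hg (Fintype.card m) (charpoly_monic _).ne_zero]

open scoped Matrix.Norms.L2Operator in
lemma continuous_trace_cfc {α : Type*} [TopologicalSpace α] {M : α → Matrix n n ℂ} {f : ℝ → ℝ}
    (hf : Continuous f) (hM : Continuous M) (hherm : ∀ x, (M x).IsHermitian) :
    Continuous fun x => (cfc f (M x)).trace :=
  (hM.cfc_of_mem_nhdsSet f (s := Set.univ) Filter.univ_mem
    (fun x => (hherm x).isSelfAdjoint) hf.continuousOn).matrix_trace

end FunctionalCalculus

section Entropy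

variable {m n : Type*} [Fintype m] [DecidableEq m] [Fintype n] [DecidableEq n]

lemma vNEntropy_eq_trace_cfc (M : Matrix n n ℂ) :
    vNEntropy M = (cfc Real.negMulLog M).trace.re / Real.log 2 := by
  by_cases hM : M.IsHermitian
  · simp [vNEntropy, dif_pos hM, trace_cfc hM, Real.negMulLog, Real.logb, neg_div,
      Finset.sum_div, ← mul_div_assoc]
  · have hcfc : cfc Real.negMulLog M = 0 := cfc_apply_of_not_predicate M hM
    simp [vNEntropy, dif_neg hM, hcfc]

lemma vNEntropy_zero : vNEntropy (0 : Matrix n n ℂ) = 0 := by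
  simp [vNEntropy_eq_trace_cfc, cfc_apply_zero]

lemma vNEntropy_submatrix (e : m ≃ n) {M : Matrix n n ℂ} (hM : M.IsHermitian) :
    vNEntropy (M.submatrix e e) = vNEntropy M := by
  rw [vNEntropy_eq_trace_cfc, vNEntropy_eq_trace_cfc, trace_cfc_submatrix e hM]

-- `N * Nᴴ` and `(Nᴴ * N)ᵀ` are the two marginals of the pure state with coefficient matrix `N`.
lemma vNEntropy_mul_conjTranspose_self (N : Matrix m n ℂ) :
    vNEntropy (N * Nᴴ) = vNEntropy (Nᴴ * N)ᵀ := by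
  rw [vNEntropy_eq_trace_cfc, vNEntropy_eq_trace_cfc,
    trace_cfc_transpose (isHermitian_conjTranspose_mul_self N),
    trace_cfc_mul_conjTranspose_self Real.negMulLog_zero]

lemma continuous_vNEntropy {α : Type*} [TopologicalSpace α] {M : α → Matrix n n ℂ}
    (hM : Continuous M) (hherm : ∀ x, (M x).IsHermitian) :
    Continuous fun x => vNEntropy (M x) := by
  simp only [vNEntropy_eq_trace_cfc]
  exact (Complex.continuous_re.comp
    (continuous_trace_cfc Real.continuous_negMulLog hM hherm)).div_const _

end Entropy

/-! ### Monotonicity of relative entropy -/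

section SpectralSum

variable {n : Type*} [Fintype n] [DecidableEq n] {ρ σ : Matrix n n ℂ}

/-- The sum `∑ i j, |⟨u i, v j⟩|² φ (p i) (q j)` over the eigenpairs `(p i, u i)` of `ρ` and
`(q j, v j)` of `σ`. It extends `Tr (f ρ) (g σ)` from products `φ p q = f p * g q` to arbitrary
functions of two variables. -/
noncomputable def spectralSum (hρ : ρ.IsHermitian) (hσ : σ.IsHermitian) (φ : ℝ → ℝ → ℝ) : ℝ :=
  ∑ i, ∑ j, Complex.normSq (eigenMatrix hρ hσ 1 i j) * φ (hρ.eigenvalues i) (hσ.eigenvalues j)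

variable (hρ : ρ.IsHermitian) (hσ : σ.IsHermitian)

lemma re_trace_cfc_mul_cfc (f g : ℝ → ℝ) :
    (cfc f ρ * cfc g σ).trace.re = spectralSum hρ hσ fun p q => f p * g q := by
  have hbasis : eigenMatrix hρ hρ (cfc g σ) = eigenMatrix hρ hσ 1 *
      (diagonal (fun j => (g (hσ.eigenvalues j) : ℂ)) * (eigenMatrix hρ hσ 1)ᴴ) := by
    rw [conjTranspose_eigenMatrix, conjTranspose_one, ← eigenMatrix_cfc, ← eigenMatrix_mul,
      ← eigenMatrix_mul, Matrix.one_mul, Matrix.mul_one]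
  rw [trace_cfc_mul hρ, hbasis, spectralSum, Complex.re_sum]
  refine Finset.sum_congr rfl fun i _ => ?_
  rw [Complex.re_ofReal_mul, mul_apply, Complex.re_sum, Finset.mul_sum]
  refine Finset.sum_congr rfl fun j _ => ?_
  rw [diagonal_mul, conjTranspose_apply, mul_left_comm, Complex.star_def, Complex.mul_conj,
    Complex.re_ofReal_mul, Complex.ofReal_re]
  ring

lemma re_trace_cfc_eq_spectralSum (f : ℝ → ℝ) :
    (cfc f ρ).trace.re = spectralSum hρ hσ fun p _ => f p := by
  simpa [cfc_const_one ℝ σ hσ.isSelfAdjoint] using re_trace_cfc_mul_cfc hρ hσ f fun _ => 1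

lemma re_trace_eq_spectralSum : ρ.trace.re = spectralSum hρ hσ fun p _ => p := by
  rw [← re_trace_cfc_eq_spectralSum hρ hσ fun p => p, cfc_id' ℝ ρ hρ.isSelfAdjoint]

lemma spectralSum_sub (φ ψ : ℝ → ℝ → ℝ) :
    spectralSum hρ hσ (fun p q => φ p q - ψ p q) =
      spectralSum hρ hσ φ - spectralSum hρ hσ ψ := by
  simp only [spectralSum, mul_sub, Finset.sum_sub_distrib]

/-- Relative entropy `Tr ρ (log ρ - log σ)`, with the natural logarithm. It has its usual meaning
only for invertible `σ`, because `log 0 = 0`. -/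
noncomputable def relEntropy (ρ σ : Matrix n n ℂ) : ℝ :=
  (ρ * (cfc Real.log ρ - cfc Real.log σ)).trace.re

lemma mul_cfc_log (hρ : ρ.IsHermitian) :
    ρ * cfc Real.log ρ = cfc (fun p => p * Real.log p) ρ := by
  rw [cfc_mul (fun p => p) Real.log ρ continuousOn_id (finite_real_spectrum.continuousOn _),
    cfc_id' ℝ ρ hρ.isSelfAdjoint]

lemma re_trace_mul_cfc_log (hρ : ρ.IsHermitian) :
    (ρ * cfc Real.log ρ).trace.re = -(Real.log 2 * vNEntropy ρ) := by
  have hlog : Real.log 2 ≠ 0 := (Real.log_pos one_lt_two).ne'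
  rw [vNEntropy_eq_trace_cfc, mul_div_cancel₀ _ hlog, mul_cfc_log hρ, ← Complex.neg_re,
    ← trace_neg, ← cfc_neg]
  simp [Real.negMulLog]

lemma relEntropy_eq_spectralSum :
    relEntropy ρ σ = spectralSum hρ hσ fun p q => p * (Real.log p - Real.log q) := by
  have hlogσ : (ρ * cfc Real.log σ).trace.re = spectralSum hρ hσ fun p q => p * Real.log q := by
    rw [← re_trace_cfc_mul_cfc hρ hσ fun p => p, cfc_id' ℝ ρ hρ.isSelfAdjoint]
  simp only [relEntropy, mul_sub, trace_sub, Complex.sub_re, mul_cfc_log hρ, hlogσ,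
    spectralSum_sub, re_trace_cfc_eq_spectralSum hρ hσ]

end SpectralSum

section Variational

variable {n : Type*} [Fintype n] {ρ σ : Matrix n n ℂ}

/-- The functional `2 Re Tr ρX - Re Tr σXX* - t Re Tr ρX*X`, linear in the pair `(ρ, σ)`, whose
supremum over `X` is `resolventSum`. -/
noncomputable def quadForm (t : ℝ) (ρ σ X : Matrix n n ℂ) : ℝ :=
  2 * (ρ * X).trace.re - (σ * (X * Xᴴ)).trace.re - t * (ρ * (Xᴴ * X)).trace.re

variable [DecidableEq n]

/-- The sum `∑ i j, |⟨u i, v j⟩|² p i ² / (q j + t p i)`, from which the relative entropy is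
recovered by integration over `t`. -/
noncomputable def resolventSum (hρ : ρ.IsHermitian) (hσ : σ.IsHermitian) (t : ℝ) : ℝ :=
  spectralSum hρ hσ fun p q => p ^ 2 / (q + t * p)

section Hermitian

variable (hρ : ρ.IsHermitian) (hσ : σ.IsHermitian)

lemma re_trace_mul_eq_sum (X : Matrix n n ℂ) :
    (ρ * X).trace.re = ∑ i, ∑ j, hρ.eigenvalues i *
      (eigenMatrix hρ hσ 1 i j * eigenMatrix hσ hρ X j i).re := by
  simp only [trace_mul_eq_sum_eigenvalues hρ, Complex.re_sum, Complex.re_ofReal_mul,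
    ← Finset.mul_sum]
  simp only [← Complex.re_sum, ← mul_apply, ← eigenMatrix_mul, Matrix.one_mul]

lemma re_trace_mul_mul_conjTranspose_self (X : Matrix n n ℂ) :
    (ρ * (X * Xᴴ)).trace.re = ∑ i, ∑ j, hρ.eigenvalues i *
      Complex.normSq (eigenMatrix hρ hσ X i j) := by
  simp only [trace_mul_eq_sum_eigenvalues hρ, eigenMatrix_mul hρ hρ hσ X,
    ← conjTranspose_eigenMatrix, mul_apply, conjTranspose_apply, Complex.star_def,
    Complex.mul_conj, Complex.re_sum, Complex.re_ofReal_mul, Complex.ofReal_re, Finset.mul_sum]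

-- The quadratic polynomials in the entries of `eigenMatrix hσ hρ X` are independent, so that the
-- functional can be maximized entry by entry.
lemma quadForm_eq_sum (t : ℝ) (X : Matrix n n ℂ) :
    quadForm t ρ σ X = ∑ i, ∑ j,
      (2 * (hρ.eigenvalues i * (eigenMatrix hρ hσ 1 i j * eigenMatrix hσ hρ X j i).re) -
        (hσ.eigenvalues j + t * hρ.eigenvalues i) *
          Complex.normSq (eigenMatrix hσ hρ X j i)) := by
  have h_conj_mul : (ρ * (Xᴴ * X)).trace.re = ∑ i, ∑ j, hρ.eigenvalues i *
      Complex.normSq (eigenMatrix hσ hρ X j i) := by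
    have h := re_trace_mul_mul_conjTranspose_self hρ hσ Xᴴ
    simpa only [conjTranspose_conjTranspose, ← conjTranspose_eigenMatrix hσ hρ,
      conjTranspose_apply, Complex.star_def, Complex.normSq_conj] using h
  rw [quadForm, re_trace_mul_eq_sum hρ hσ, re_trace_mul_mul_conjTranspose_self hσ hρ, h_conj_mul,
    Finset.sum_comm (f := fun j i => hσ.eigenvalues j * _)]
  simp only [Finset.mul_sum, ← Finset.sum_sub_distrib]
  exact Finset.sum_congr rfl fun i _ => Finset.sum_congr rfl fun j _ => by ring

end Hermitian

lemma quadForm_le_resolventSum (hρ : ρ.PosDef) (hσ : σ.PosDef) {t : ℝ} (ht : 0 ≤ t)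
    (X : Matrix n n ℂ) : quadForm t ρ σ X ≤ resolventSum hρ.1 hσ.1 t := by
  rw [quadForm_eq_sum hρ.1 hσ.1]
  refine Finset.sum_le_sum fun i _ => Finset.sum_le_sum fun j _ => ?_
  have hp := hρ.eigenvalues_pos i
  have hq := hσ.eigenvalues_pos j
  generalize hρ.1.eigenvalues i = p at *
  generalize hσ.1.eigenvalues j = q at *
  generalize eigenMatrix hρ.1 hσ.1 1 i j = w
  generalize eigenMatrix hσ.1 hρ.1 X j i = y
  have hd : 0 < q + t * p := by positivity
  rw [← mul_div_assoc, le_div_iff₀ hd, Complex.mul_re, Complex.normSq_apply, Complex.normSq_apply]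
  nlinarith [sq_nonneg (p * w.re - (q + t * p) * y.re), sq_nonneg (p * w.im + (q + t * p) * y.im)]

lemma exists_quadForm_eq_resolventSum (hρ : ρ.PosDef) (hσ : σ.PosDef) {t : ℝ} (ht : 0 ≤ t) :
    ∃ X, quadForm t ρ σ X = resolventSum hρ.1 hσ.1 t := by
  obtain ⟨X, hX⟩ := eigenMatrix_surjective hσ.1 hρ.1 <| Matrix.of fun j i =>
    ((hρ.1.eigenvalues i / (hσ.1.eigenvalues j + t * hρ.1.eigenvalues i) : ℝ) : ℂ) *
      starRingEnd ℂ (eigenMatrix hρ.1 hσ.1 1 i j)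
  refine ⟨X, ?_⟩
  rw [quadForm_eq_sum hρ.1 hσ.1, hX]
  refine Finset.sum_congr rfl fun i _ => Finset.sum_congr rfl fun j _ => ?_
  have hp := hρ.eigenvalues_pos i
  have hq := hσ.eigenvalues_pos j
  rw [of_apply]
  generalize hρ.1.eigenvalues i = p at *
  generalize hσ.1.eigenvalues j = q at *
  generalize eigenMatrix hρ.1 hσ.1 1 i j = w
  have : q + t * p ≠ 0 := by positivity
  rw [mul_left_comm w, Complex.mul_conj, Complex.normSq_mul, Complex.normSq_conj,
    Complex.normSq_ofReal, ← Complex.ofReal_mul, Complex.ofReal_re]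
  field_simp
  ring

end Variational

section TruncatedRelEntropy

variable {n : Type*} [Fintype n] [DecidableEq n] {ρ σ : Matrix n n ℂ}

/-- The integral of `resolventSum hρ hσ` from `0` to `t`, in closed form. -/
noncomputable def truncRelEntropy (hρ : ρ.IsHermitian) (hσ : σ.IsHermitian) (t : ℝ) : ℝ :=
  spectralSum hρ hσ fun p q => p * (Real.log (q + t * p) - Real.log q)

lemma truncRelEntropy_zero (hρ : ρ.IsHermitian) (hσ : σ.IsHermitian) :
    truncRelEntropy hρ hσ 0 = 0 := by
  simp [truncRelEntropy, spectralSum]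

lemma hasDerivAt_truncRelEntropy (hρ : ρ.PosDef) (hσ : σ.PosDef) {t : ℝ} (ht : 0 ≤ t) :
    HasDerivAt (truncRelEntropy hρ.1 hσ.1) (resolventSum hρ.1 hσ.1 t) t := by
  refine HasDerivAt.fun_sum fun i _ => HasDerivAt.fun_sum fun j _ => HasDerivAt.const_mul _ ?_
  have hp := hρ.eigenvalues_pos i
  have hq := hσ.eigenvalues_pos j
  generalize hρ.1.eigenvalues i = p at *
  generalize hσ.1.eigenvalues j = q at *
  have hlin : HasDerivAt (fun s : ℝ => q + s * p) p t := by
    simpa using ((hasDerivAt_id t).mul_const p).const_add q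
  have hd : q + t * p ≠ 0 := by positivity
  exact (((hlin.log hd).sub_const (Real.log q)).const_mul p).congr_deriv (by ring)

lemma tendsto_truncRelEntropy_sub_log (hρ : ρ.PosDef) (hσ : σ.PosDef) :
    Filter.Tendsto (fun t => truncRelEntropy hρ.1 hσ.1 t - Real.log t * ρ.trace.re)
      Filter.atTop (nhds (relEntropy ρ σ)) := by
  have hterm {p : ℝ} (hp : 0 < p) (q : ℝ) :
      Filter.Tendsto (fun t : ℝ => p * (Real.log (q / t + p) - Real.log q))
        Filter.atTop (nhds (p * (Real.log p - Real.log q))) := by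
    have hlim : Filter.Tendsto (fun t : ℝ => q / t + p) Filter.atTop (nhds p) := by
      simpa using (Filter.tendsto_id.const_div_atTop q).add_const p
    exact ((hlim.log hp.ne').sub_const _).const_mul p
  rw [relEntropy_eq_spectralSum hρ.1 hσ.1]
  refine (tendsto_finsetSum _ fun i _ => tendsto_finsetSum _ fun j _ =>
    (hterm (hρ.eigenvalues_pos i) (hσ.1.eigenvalues j)).const_mul _).congr' ?_
  filter_upwards [Filter.eventually_gt_atTop 0] with t ht
  rw [re_trace_eq_spectralSum hρ.1 hσ.1, truncRelEntropy]
  simp only [spectralSum, Finset.mul_sum, ← Finset.sum_sub_distrib]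
  refine Finset.sum_congr rfl fun i _ => Finset.sum_congr rfl fun j _ => ?_
  have hp := hρ.eigenvalues_pos i
  have hq := hσ.eigenvalues_pos j
  generalize hρ.1.eigenvalues i = p at *
  generalize hσ.1.eigenvalues j = q at *
  have hfactor : q + t * p = t * (q / t + p) := by field_simp
  rw [hfactor, Real.log_mul ht.ne' (by positivity)]
  ring

end TruncatedRelEntropy

section Monotonicity

variable {m n : Type*} [Fintype m] [DecidableEq m] [Fintype n] [DecidableEq n]
  {ρ σ : Matrix n n ℂ} {ρ' σ' : Matrix m m ℂ} {Φ : Matrix m m ℂ →⋆ₐ[ℂ] Matrix n n ℂ}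

lemma resolventSum_le_of_dual (hρ : ρ.PosDef) (hσ : σ.PosDef) (hρ' : ρ'.PosDef)
    (hσ' : σ'.PosDef) (hΦρ : ∀ X, (ρ * Φ X).trace = (ρ' * X).trace)
    (hΦσ : ∀ X, (σ * Φ X).trace = (σ' * X).trace) {t : ℝ} (ht : 0 ≤ t) :
    resolventSum hρ'.1 hσ'.1 t ≤ resolventSum hρ.1 hσ.1 t := by
  obtain ⟨X, hX⟩ := exists_quadForm_eq_resolventSum hρ' hσ' ht
  have hstar : (Φ X)ᴴ = Φ Xᴴ := (map_star Φ X).symm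
  calc resolventSum hρ'.1 hσ'.1 t = quadForm t ρ σ (Φ X) := by
        rw [← hX, quadForm, quadForm, hstar, ← map_mul, ← map_mul, hΦρ, hΦρ, hΦσ]
    _ ≤ resolventSum hρ.1 hσ.1 t := quadForm_le_resolventSum hρ hσ ht (Φ X)

lemma truncRelEntropy_le_of_dual (hρ : ρ.PosDef) (hσ : σ.PosDef) (hρ' : ρ'.PosDef)
    (hσ' : σ'.PosDef) (hΦρ : ∀ X, (ρ * Φ X).trace = (ρ' * X).trace)
    (hΦσ : ∀ X, (σ * Φ X).trace = (σ' * X).trace) {t : ℝ} (ht : 0 ≤ t) :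
    truncRelEntropy hρ'.1 hσ'.1 t ≤ truncRelEntropy hρ.1 hσ.1 t := by
  have hderiv {s : ℝ} (hs : 0 ≤ s) :
      HasDerivAt (fun s => truncRelEntropy hρ.1 hσ.1 s - truncRelEntropy hρ'.1 hσ'.1 s)
        (resolventSum hρ.1 hσ.1 s - resolventSum hρ'.1 hσ'.1 s) s :=
    (hasDerivAt_truncRelEntropy hρ hσ hs).sub (hasDerivAt_truncRelEntropy hρ' hσ' hs)
  have hmono : MonotoneOn
      (fun s => truncRelEntropy hρ.1 hσ.1 s - truncRelEntropy hρ'.1 hσ'.1 s) (Set.Ici 0) := by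
    refine monotoneOn_of_hasDerivWithinAt_nonneg (convex_Ici 0)
      (fun s hs => (hderiv hs).continuousAt.continuousWithinAt)
      (fun s hs => (hderiv (interior_subset hs)).hasDerivWithinAt) fun s hs => ?_
    exact sub_nonneg.2 (resolventSum_le_of_dual hρ hσ hρ' hσ' hΦρ hΦσ (interior_subset hs))
  have h := hmono Set.self_mem_Ici ht ht
  simpa [truncRelEntropy_zero] using h

lemma relEntropy_le_of_dual (hρ : ρ.PosDef) (hσ : σ.PosDef) (hρ' : ρ'.PosDef)
    (hσ' : σ'.PosDef) (hΦρ : ∀ X, (ρ * Φ X).trace = (ρ' * X).trace)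
    (hΦσ : ∀ X, (σ * Φ X).trace = (σ' * X).trace) : relEntropy ρ' σ' ≤ relEntropy ρ σ := by
  have htrace : ρ'.trace = ρ.trace := by simpa using (hΦρ 1).symm
  refine le_of_tendsto_of_tendsto (tendsto_truncRelEntropy_sub_log hρ' hσ')
    (tendsto_truncRelEntropy_sub_log hρ hσ) ?_
  filter_upwards [Filter.eventually_ge_atTop 0] with t ht
  rw [htrace]
  exact sub_le_sub_right (truncRelEntropy_le_of_dual hρ hσ hρ' hσ' hΦρ hΦσ ht) _

end Monotonicity

/-! ### Partial traces -/

section PartialTrace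

open scoped Kronecker

variable {N k n : Type*}

/-- The embedding `X ↦ 1 ⊗ X` of the operators on `n` into those on `k ⊗ n`, where the index type
`N` of the large system is identified with `k × n` through `e`. -/
noncomputable def ampliation [Fintype N] [DecidableEq N] [Fintype k] [DecidableEq k] [Fintype n]
    [DecidableEq n] (e : N ≃ k × n) : Matrix n n ℂ →⋆ₐ[ℂ] Matrix N N ℂ where
  toFun X := ((1 : Matrix k k ℂ) ⊗ₖ X).submatrix e e
  map_one' := by rw [one_kronecker_one, submatrix_one_equiv]
  map_mul' X Y := by
    rw [submatrix_mul_equiv, ← mul_kronecker_mul, one_mul]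
  map_zero' := by rw [kronecker_zero, submatrix_zero]; rfl
  map_add' X Y := by rw [kronecker_add, submatrix_add]; rfl
  commutes' r := by
    simp only [Algebra.algebraMap_eq_smul_one, kronecker_smul, one_kronecker_one, submatrix_smul,
      Pi.smul_apply, submatrix_one_equiv]
  map_star' X := by
    simp only [star_eq_conjTranspose, conjTranspose_submatrix, conjTranspose_kronecker,
      conjTranspose_one]

/-- Partial trace over the factor `k`, where `N` is identified with `k × n` through `e`. -/
noncomputable def ptrace [Fintype k] (e : N ≃ k × n) : Matrix N N ℂ →ₗ[ℂ] Matrix n n ℂ where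
  toFun ρ := Matrix.of fun x y => ∑ a, ρ (e.symm (a, x)) (e.symm (a, y))
  map_add' ρ σ := by ext x y; simp [Finset.sum_add_distrib]
  map_smul' c ρ := by ext x y; simp [Finset.mul_sum]

variable [Fintype k] (e : N ≃ k × n)

lemma ptrace_eq_sum_submatrix (ρ : Matrix N N ℂ) :
    ptrace e ρ = ∑ a, ρ.submatrix (fun x => e.symm (a, x)) fun x => e.symm (a, x) := by
  ext x y
  simp [ptrace, Matrix.sum_apply]

lemma continuous_ptrace : Continuous (ptrace e) :=
  continuous_matrix fun x y => continuous_finsetSum _ fun a _ =>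
    continuous_apply_apply (e.symm (a, x)) (e.symm (a, y))

lemma ptrace_isHermitian {ρ : Matrix N N ℂ} (hρ : ρ.IsHermitian) : (ptrace e ρ).IsHermitian := by
  rw [ptrace_eq_sum_submatrix]
  exact isSelfAdjoint_sum _ fun a _ => (hρ.submatrix _).isSelfAdjoint

lemma ptrace_posDef [Nonempty k] {ρ : Matrix N N ℂ} (hρ : ρ.PosDef) : (ptrace e ρ).PosDef := by
  rw [ptrace_eq_sum_submatrix]
  exact posDef_sum Finset.univ_nonempty fun a _ =>
    hρ.submatrix (e.symm.injective.comp (Prod.mk_right_injective a))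

variable [Fintype N] [DecidableEq N] [DecidableEq k] [Fintype n] [DecidableEq n]

lemma ampliation_posDef {σ : Matrix n n ℂ} (hσ : σ.PosDef) : (ampliation e σ).PosDef :=
  (PosDef.one.kronecker hσ).submatrix e.injective

lemma trace_mul_ampliation (ρ : Matrix N N ℂ) (X : Matrix n n ℂ) :
    (ρ * ampliation e X).trace = (ptrace e ρ * X).trace := by
  have hamp (i j : N) :
      ampliation e X i j = (1 : Matrix k k ℂ) (e i).1 (e j).1 * X (e i).2 (e j).2 := rfl
  calc (ρ * ampliation e X).trace
      = ∑ a, ∑ x, ∑ y, ρ (e.symm (a, x)) (e.symm (a, y)) * X y x := by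
        simp [trace, mul_apply, hamp, ← e.symm.sum_comp, Fintype.sum_prod_type, one_apply]
    _ = ∑ x, ∑ a, ∑ y, ρ (e.symm (a, x)) (e.symm (a, y)) * X y x := Finset.sum_comm
    _ = (ptrace e ρ * X).trace := by
        simp only [trace, diag_apply, mul_apply, ptrace, LinearMap.coe_mk, AddHom.coe_mk,
          of_apply, Finset.sum_mul]
        exact Finset.sum_congr rfl fun x _ => Finset.sum_comm

lemma ampliation_cfc (f : ℝ → ℝ) {σ : Matrix n n ℂ} (hσ : σ.IsHermitian) :
    ampliation e (cfc f σ) = cfc f (ampliation e σ) :=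
  (ampliation e).map_cfc f σ (finite_real_spectrum.continuousOn f)
    (LinearMap.continuous_of_finiteDimensional (ampliation e).toAlgHom.toLinearMap)
    hσ.isSelfAdjoint (hσ.isSelfAdjoint.map (ampliation e))

lemma relEntropy_ampliation_ptrace {ρ : Matrix N N ℂ} (hρ : ρ.IsHermitian) :
    relEntropy ρ (ampliation e (ptrace e ρ)) =
      Real.log 2 * (vNEntropy (ptrace e ρ) - vNEntropy ρ) := by
  have hptrace := ptrace_isHermitian e hρ
  rw [relEntropy, ← ampliation_cfc e _ hptrace, mul_sub, trace_sub, Complex.sub_re,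
    trace_mul_ampliation, re_trace_mul_cfc_log hρ, re_trace_mul_cfc_log hptrace]
  ring

end PartialTrace

/-! ### Strong subadditivity and weak monotonicity -/

section MarginalEntropies

variable {A B C : Type*} [Fintype A] [Fintype B] [DecidableEq B] [Fintype C]
  (ρ : Matrix (A × B × C) (A × B × C) ℂ)

/-- The identification of `A ⊗ (B ⊗ C)` with `C ⊗ (A ⊗ B)`, for tracing out the last system. -/
def rotateProd (A B C : Type*) : A × B × C ≃ C × A × B :=
  (Equiv.prodAssoc A B C).symm.trans (Equiv.prodComm (A × B) C)

lemma S3B_eq_vNEntropy_ptrace :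
    S3B ρ = vNEntropy (ptrace (Equiv.refl (A × B)) (ptrace (rotateProd A B C) ρ)) :=
  rfl

variable [DecidableEq A] in
lemma S3AB_eq_vNEntropy_ptrace :
    S3AB ρ = vNEntropy (ptrace (rotateProd A B C) ρ) :=
  rfl

variable [DecidableEq C] in
lemma S3BC_eq_vNEntropy_ptrace :
    S3BC ρ = vNEntropy (ptrace (Equiv.refl (A × B × C)) ρ) :=
  rfl

end MarginalEntropies

section StrongSubadditivity

variable {A B C : Type*} [Fintype A] [DecidableEq A] [Fintype B] [DecidableEq B]
  [Fintype C] [DecidableEq C] {ρ : Matrix (A × B × C) (A × B × C) ℂ}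

lemma ptrace_ampliation_comm (X : Matrix (B × C) (B × C) ℂ) :
    ptrace (rotateProd A B C) (ampliation (Equiv.refl (A × B × C)) X) =
      ampliation (Equiv.refl (A × B)) (ptrace (Equiv.prodComm B C) X) := by
  ext ⟨a, b⟩ ⟨a', b'⟩
  exact (Finset.mul_sum _ (fun c => X (b, c) (b', c)) ((1 : Matrix A A ℂ) a a')).symm

lemma S3_ssa_of_posDef [Nonempty A] [Nonempty C] (hρ : ρ.PosDef) :
    S3ABC ρ + S3B ρ ≤ S3AB ρ + S3BC ρ := by
  have hAB := ptrace_posDef (rotateProd A B C) hρ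
  have hBC := ptrace_posDef (Equiv.refl (A × B × C)) hρ
  have hB := ptrace_posDef (Equiv.refl (A × B)) hAB
  have hcomm : ptrace (Equiv.prodComm B C) (ptrace (Equiv.refl (A × B × C)) ρ) =
      ptrace (Equiv.refl (A × B)) (ptrace (rotateProd A B C) ρ) := by
    ext b b'
    exact Finset.sum_comm
  have hmono := relEntropy_le_of_dual hρ (ampliation_posDef (Equiv.refl _) hBC) hAB
    (ampliation_posDef (Equiv.refl _) hB) (trace_mul_ampliation (rotateProd A B C) ρ)
    (fun X => by rw [trace_mul_ampliation, ptrace_ampliation_comm, hcomm])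
  rw [relEntropy_ampliation_ptrace _ hρ.1, relEntropy_ampliation_ptrace _ hAB.1,
    mul_le_mul_iff_of_pos_left (Real.log_pos one_lt_two)] at hmono
  rw [S3ABC, S3B_eq_vNEntropy_ptrace, S3AB_eq_vNEntropy_ptrace, S3BC_eq_vNEntropy_ptrace]
  linarith

lemma S3_ssa_of_nonempty [Nonempty A] [Nonempty C] (hρ : ρ.PosSemidef) :
    S3ABC ρ + S3B ρ ≤ S3AB ρ + S3BC ρ := by
  let γ (ε : ℝ) : Matrix (A × B × C) (A × B × C) ℂ := ρ + ε • 1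
  have hγ : Continuous γ := by fun_prop
  have hγAB : Continuous fun ε => ptrace (rotateProd A B C) (γ ε) :=
    (continuous_ptrace _).comp hγ
  have hherm (ε : ℝ) : (γ ε).IsHermitian := hρ.1.add (isHermitian_one.smul (.all ε))
  have hhermAB (ε : ℝ) : (ptrace (rotateProd A B C) (γ ε)).IsHermitian :=
    ptrace_isHermitian _ (hherm ε)
  have hposDef (ε : ℝ) (hε : 0 < ε) : (γ ε).PosDef :=
    PosDef.posSemidef_add hρ (PosDef.one.smul hε)
  have hABC : Continuous fun ε => S3ABC (γ ε) := continuous_vNEntropy hγ hherm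
  have hAB : Continuous fun ε => S3AB (γ ε) := by
    simp only [S3AB_eq_vNEntropy_ptrace]
    exact continuous_vNEntropy hγAB hhermAB
  have hBC : Continuous fun ε => S3BC (γ ε) := by
    simp only [S3BC_eq_vNEntropy_ptrace]
    exact continuous_vNEntropy ((continuous_ptrace _).comp hγ) fun ε =>
      ptrace_isHermitian _ (hherm ε)
  have hB : Continuous fun ε => S3B (γ ε) := by
    simp only [S3B_eq_vNEntropy_ptrace]
    exact continuous_vNEntropy ((continuous_ptrace _).comp hγAB) fun ε =>
      ptrace_isHermitian _ (hhermAB ε)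
  have hle : S3ABC (γ 0) + S3B (γ 0) ≤ S3AB (γ 0) + S3BC (γ 0) :=
    le_on_closure (s := Set.Ioi 0) (fun ε hε => S3_ssa_of_posDef (hposDef ε hε))
      (hABC.add hB).continuousOn (hAB.add hBC).continuousOn (by simp)
  simpa [γ] using hle

lemma S3_ssa (hρ : ρ.PosSemidef) : S3ABC ρ + S3B ρ ≤ S3AB ρ + S3BC ρ := by
  rcases isEmpty_or_nonempty (A × B × C) with _ | ⟨a, _, c⟩
  · simp [Subsingleton.elim ρ 0, S3ABC, S3B_eq_vNEntropy_ptrace, S3AB_eq_vNEntropy_ptrace,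
      S3BC_eq_vNEntropy_ptrace, vNEntropy_zero]
  · have : Nonempty A := ⟨a⟩
    have : Nonempty C := ⟨c⟩
    exact S3_ssa_of_nonempty hρ

lemma S3_ssa_pivotC (hρ : ρ.PosSemidef) : S3ABC ρ + S3C ρ ≤ S3AC ρ + S3BC ρ := by
  let swapBC : A × C × B ≃ A × B × C := (Equiv.refl A).prodCongr (Equiv.prodComm C B)
  have hssa := S3_ssa (hρ.submatrix swapBC)
  have hABC : S3ABC (ρ.submatrix swapBC swapBC) = S3ABC ρ := vNEntropy_submatrix swapBC hρ.1
  have hBC : S3BC (ρ.submatrix swapBC swapBC) = S3BC ρ :=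
    vNEntropy_submatrix (Equiv.prodComm C B) (ptrace_isHermitian (Equiv.refl (A × B × C)) hρ.1)
  have hC : S3B (ρ.submatrix swapBC swapBC) = S3C ρ := rfl
  have hAC : S3AB (ρ.submatrix swapBC swapBC) = S3AC ρ := rfl
  rwa [hABC, hBC, hC, hAC] at hssa

end StrongSubadditivity

section Purification

variable {A B C D : Type*} [Fintype A] [Fintype B] [DecidableEq B] [Fintype C] [Fintype D]
  (M : Matrix (A × B × C) D ℂ)

/-- The coefficients of the pure state of `ABCD` with coefficient matrix `M`, arranged along the cut
`ABD | C`. The marginal of this state on `ABD` is `cutC M * (cutC M)ᴴ`, and that on `ABC` is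
`M * Mᴴ`. -/
def cutC (M : Matrix (A × B × C) D ℂ) : Matrix (A × B × D) C ℂ :=
  Matrix.of fun x c => M (x.1, x.2.1, c) x.2.2

/-- The coefficients of the pure state of `ABCD` with coefficient matrix `M`, arranged along the cut
`BD | AC`. -/
def cutAC (M : Matrix (A × B × C) D ℂ) : Matrix (B × D) (A × C) ℂ :=
  Matrix.of fun x y => M (y.1, x.1, y.2) x.2

lemma S3B_cutC : S3B (cutC M * (cutC M)ᴴ) = S3B (M * Mᴴ) := by
  refine congrArg vNEntropy ?_
  ext b b'
  exact Finset.sum_congr rfl fun a _ => Finset.sum_comm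

variable [DecidableEq A]

lemma S3AB_cutC : S3AB (cutC M * (cutC M)ᴴ) = S3AB (M * Mᴴ) := by
  refine congrArg vNEntropy ?_
  ext x y
  exact Finset.sum_comm

variable [DecidableEq C] [DecidableEq D]

lemma S3ABC_cutC : S3ABC (cutC M * (cutC M)ᴴ) = S3C (M * Mᴴ) := by
  refine (vNEntropy_mul_conjTranspose_self (cutC M)).trans (congrArg vNEntropy ?_)
  ext c c'
  simp [mul_apply, cutC, Fintype.sum_prod_type, mul_comm]

lemma S3BC_cutC : S3BC (cutC M * (cutC M)ᴴ) = S3AC (M * Mᴴ) := by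
  have hcut : S3BC (cutC M * (cutC M)ᴴ) = vNEntropy (cutAC M * (cutAC M)ᴴ) := by
    refine congrArg vNEntropy ?_
    ext x y
    simp [mul_apply, cutC, cutAC, Fintype.sum_prod_type]
  refine hcut.trans ((vNEntropy_mul_conjTranspose_self (cutAC M)).trans (congrArg vNEntropy ?_))
  ext x y
  simp [mul_apply, cutAC, redAC, Fintype.sum_prod_type, mul_comm]

open scoped MatrixOrder in
lemma S3_weak_monotonicity {ρ : Matrix (A × B × C) (A × B × C) ℂ} (hρ : ρ.PosSemidef) :
    S3B ρ + S3C ρ ≤ S3AB ρ + S3AC ρ := by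
  obtain ⟨M, rfl⟩ : ∃ M, ρ = M * Mᴴ := CStarAlgebra.nonneg_iff_eq_mul_star_self.1 hρ.nonneg
  have hssa := S3_ssa (posSemidef_self_mul_conjTranspose (cutC M))
  rw [S3ABC_cutC, S3B_cutC, S3AB_cutC, S3BC_cutC] at hssa
  linarith

end Purification

theorem cond_entropy_nonneg_of_saturated_SSA_general
    {A B C : Type*} [Fintype A] [DecidableEq A] [Fintype B] [DecidableEq B]
    [Fintype C] [DecidableEq C]
    (ρ : Matrix (A × B × C) (A × B × C) ℂ) (hρ : ρ.PosSemidef) :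
    2 * (S3C ρ - S3AC ρ) ≤ S3AB ρ + S3BC ρ - S3ABC ρ - S3B ρ := by
  linarith [S3_ssa_pivotC hρ, S3_weak_monotonicity hρ]

/-- **Remark.** If a tripartite state saturates strong subadditivity at pivot `B`,
i.e. `I(A;C|B) = 0`, then `S(AC) ≥ S(C)`, i.e. `S(A|C) ≥ 0`. -/
theorem cond_entropy_nonneg_of_saturated_SSA
    {A B C : Type*} [Fintype A] [DecidableEq A] [Fintype B] [DecidableEq B]
    [Fintype C] [DecidableEq C]
    (ρ : Matrix (A × B × C) (A × B × C) ℂ) (hρ : IsState ρ)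
    (hsat : S3AB ρ + S3BC ρ - S3ABC ρ - S3B ρ = 0) :
    S3C ρ ≤ S3AC ρ := by
  linarith [cond_entropy_nonneg_of_saturated_SSA_general ρ hρ.1]
end

section
/- For each n, the topological closure of the set of entropy vectors {(S(ρ^X))_{∅ ≠ X ⊆ {1,…,n}} : ρ a state of an n-partite quantum system on finite-dimensional Hilbert spaces} is a convex cone in ℝ^{2^n − 1}: it is closed under addition and under multiplication by nonnegative real scalars. -/
/-!
Entropy is additive on tensor products, so entropy vectors may be added.

Place `ρ` and `σ` on orthogonal local subspaces of dimensions `d i` and `d' i` inside dimension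
`d i + d' i`. For nonempty `X` the marginals still have orthogonal supports, so the mixture with
weights `p` and `1 - p` has `X`-entropy `p S(ρ^X) + (1 - p) S(σ^X) + h(p)`, with `h` the binary
entropy. Taking `ρ^{⊗ ⌊c / p⌋}` for the first state and the trivial state, whose entropies vanish,
for the second gives `p ⌊c / p⌋ v + h(p) (1, …, 1)`, which tends to `c v` as `p → 0`.
-/

open scoped BigOperators ComplexOrder

/-- The reduced (marginal) state of an `n`-partite state `ρ` on the parties in `X`,
obtained by tracing out the parties outside `X`. -/
noncomputable def marginal {n : ℕ} {d : Fin n → ℕ} (X : Finset (Fin n))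
    (ρ : Matrix (∀ i, Fin (d i)) (∀ i, Fin (d i)) ℂ) :
    Matrix (∀ i : X, Fin (d i)) (∀ i : X, Fin (d i)) ℂ :=
  Matrix.of fun f f' =>
    ∑ g : ∀ i : {i : Fin n // i ∉ X}, Fin (d i),
      ρ (fun i => if h : i ∈ X then f ⟨i, h⟩ else g ⟨i, h⟩)
        (fun i => if h : i ∈ X then f' ⟨i, h⟩ else g ⟨i, h⟩)

/-- The entropy vector of an `n`-partite state: the von Neumann entropies of all
`2ⁿ - 1` nonempty marginals. -/
noncomputable def entropyVector {n : ℕ} {d : Fin n → ℕ}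
    (ρ : Matrix (∀ i, Fin (d i)) (∀ i, Fin (d i)) ℂ) :
    {X : Finset (Fin n) // X.Nonempty} → ℝ :=
  fun X => vNEntropy (marginal X.1 ρ)

/-- The set of entropy vectors of `n`-partite states on finite-dimensional
Hilbert spaces (of arbitrary finite dimensions). -/
def entropyVectors (n : ℕ) : Set ({X : Finset (Fin n) // X.Nonempty} → ℝ) :=
  {v | ∃ (d : Fin n → ℕ) (ρ : Matrix (∀ i, Fin (d i)) (∀ i, Fin (d i)) ℂ),
        ρ.PosSemidef ∧ ρ.trace = 1 ∧ v = entropyVector ρ}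

open Filter Matrix Topology
open scoped Kronecker

/-! ### Isometries, local operators and partial traces -/

section Isometry

variable {R k k' l l' m : Type*}

lemma isHermitian_diagonal_ofReal [DecidableEq k] (x : k → ℝ) :
    (diagonal fun i => (x i : ℂ)).IsHermitian :=
  isHermitian_diagonal_of_self_adjoint _ (funext fun i => Complex.conj_ofReal (x i))

lemma isHermitian_kronecker [CommMagma R] [StarMul R] {M : Matrix k k R} {N : Matrix l l R}
    (hM : M.IsHermitian) (hN : N.IsHermitian) : (M ⊗ₖ N).IsHermitian := by
  rw [IsHermitian, conjTranspose_kronecker, hM.eq, hN.eq]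

lemma trace_submatrix_equiv [AddCommMonoid R] [Fintype k] [Fintype l] (e : l ≃ k)
    (M : Matrix k k R) : (M.submatrix e e).trace = M.trace :=
  e.sum_comp fun i => M i i

variable [CommSemiring R] [StarRing R]

lemma trace_isometry_conj [Fintype k] [DecidableEq k] [Fintype m] {W : Matrix m k R}
    (hW : Wᴴ * W = 1) (M : Matrix k k R) : (W * M * Wᴴ).trace = M.trace := by
  rw [trace_mul_comm, ← Matrix.mul_assoc, hW, Matrix.one_mul]

lemma kronecker_isometry [DecidableEq k] [DecidableEq l] [Fintype k'] [Fintype l']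
    {V : Matrix k' k R} {W : Matrix l' l R} (hV : Vᴴ * V = 1) (hW : Wᴴ * W = 1) :
    (V ⊗ₖ W)ᴴ * (V ⊗ₖ W) = 1 := by
  rw [conjTranspose_kronecker, ← mul_kronecker_mul, hV, hW, one_kronecker_one]

lemma fromCols_isometry [DecidableEq k] [DecidableEq l] [Fintype m] {V : Matrix m k R}
    {W : Matrix m l R} (hV : Vᴴ * V = 1) (hW : Wᴴ * W = 1) (hVW : Vᴴ * W = 0) :
    (fromCols V W)ᴴ * fromCols V W = 1 := by
  have hWV : Wᴴ * V = 0 := by simpa using congrArg conjTranspose hVW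
  rw [conjTranspose_fromCols_eq_fromRows_conjTranspose, fromRows_mul_fromCols, hV, hW, hVW, hWV,
    fromBlocks_one]

lemma conjTranspose_one_submatrix_mul_one_submatrix [Fintype m] [DecidableEq m] (f : k → m)
    (g : l → m) :
    ((1 : Matrix m m R).submatrix id f)ᴴ * (1 : Matrix m m R).submatrix id g
      = (1 : Matrix m m R).submatrix f g := by
  rw [conjTranspose_submatrix, conjTranspose_one,
    ← submatrix_mul _ _ f id g Function.bijective_id, Matrix.one_mul]

lemma exists_orthogonal_isometries_fin_add (a b : ℕ) :
    ∃ (V : Matrix (Fin (a + b)) (Fin a) R) (W : Matrix (Fin (a + b)) (Fin b) R),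
      Vᴴ * V = 1 ∧ Wᴴ * W = 1 ∧ Vᴴ * W = 0 := by
  refine ⟨(1 : Matrix (Fin (a + b)) (Fin (a + b)) R).submatrix id (Fin.castAdd b),
    (1 : Matrix (Fin (a + b)) (Fin (a + b)) R).submatrix id (Fin.natAdd a), ?_, ?_, ?_⟩
  · rw [conjTranspose_one_submatrix_mul_one_submatrix,
      submatrix_one _ (Fin.castAdd_injective a b)]
  · rw [conjTranspose_one_submatrix_mul_one_submatrix,
      submatrix_one _ (Fin.natAdd_injective b a)]
  · rw [conjTranspose_one_submatrix_mul_one_submatrix]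
    ext i j
    exact one_apply_ne (Fin.ne_of_lt (i.isLt.trans_le (Nat.le_add_right a j)))

end Isometry

section PiKronecker

variable {ι R : Type*} [Fintype ι] [CommSemiring R] {k l m : ι → Type*}

/-- The tensor product `⨂ i, A i` of a finite family of matrices, whose rows and columns are
indexed by the families of row and column indices: the operator acting by `A i` on the `i`-th
party. -/
def piKronecker (A : ∀ i, Matrix (m i) (k i) R) : Matrix (∀ i, m i) (∀ i, k i) R :=
  of fun f g => ∏ i, A i (f i) (g i)

lemma piKronecker_mul_piKronecker [DecidableEq ι] [∀ i, Fintype (k i)]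
    (A : ∀ i, Matrix (m i) (k i) R) (B : ∀ i, Matrix (k i) (l i) R) :
    piKronecker A * piKronecker B = piKronecker fun i => A i * B i := by
  ext f g
  simp only [piKronecker, mul_apply, of_apply, ← Finset.prod_mul_distrib, Fintype.prod_sum]

lemma conjTranspose_piKronecker [StarRing R] (A : ∀ i, Matrix (m i) (k i) R) :
    (piKronecker A)ᴴ = piKronecker fun i => (A i)ᴴ := by
  ext f g
  simp only [piKronecker, conjTranspose_apply, of_apply, star_prod]

lemma piKronecker_one [∀ i, DecidableEq (k i)] :
    piKronecker (fun i => (1 : Matrix (k i) (k i) R)) = 1 := by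
  ext f g
  simp only [piKronecker, of_apply, one_apply, Fintype.prod_boole, funext_iff]

lemma piKronecker_isometry [DecidableEq ι] [StarRing R] [∀ i, DecidableEq (k i)]
    [∀ i, Fintype (m i)] {W : ∀ i, Matrix (m i) (k i) R} (hW : ∀ i, (W i)ᴴ * W i = 1) :
    (piKronecker W)ᴴ * piKronecker W = 1 := by
  simp only [conjTranspose_piKronecker, piKronecker_mul_piKronecker, hW, piKronecker_one]

lemma piKronecker_orthogonal [DecidableEq ι] [StarRing R] [Nonempty ι] [∀ i, Fintype (m i)]
    {V : ∀ i, Matrix (m i) (k i) R} {W : ∀ i, Matrix (m i) (l i) R}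
    (hVW : ∀ i, (V i)ᴴ * W i = 0) : (piKronecker V)ᴴ * piKronecker W = 0 := by
  obtain ⟨i⟩ := ‹Nonempty ι›
  simp only [conjTranspose_piKronecker, piKronecker_mul_piKronecker, hVW]
  ext f g
  exact Finset.prod_eq_zero (Finset.mem_univ i) rfl

/-- The identification of a family of indices with its parts on `X` and off `X`, splitting the
parties into those kept and those traced out. -/
def splitEquiv [DecidableEq ι] (X : Finset ι) (k : ι → Type*) :
    (∀ i : X, k i) × (∀ i : {i // i ∉ X}, k i) ≃ ∀ i, k i :=
  (Equiv.piEquivPiSubtypeProd (· ∈ X) k).symm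

lemma piKronecker_submatrix_splitEquiv [DecidableEq ι] (X : Finset ι)
    (A : ∀ i, Matrix (m i) (k i) R) :
    (piKronecker A).submatrix (splitEquiv X m) (splitEquiv X k)
      = piKronecker (fun i : X => A i) ⊗ₖ piKronecker (fun i : {i // i ∉ X} => A i) := by
  ext f g
  obtain ⟨f, rfl⟩ := (splitEquiv X m).symm.surjective f
  obtain ⟨g, rfl⟩ := (splitEquiv X k).symm.surjective g
  rw [submatrix_apply, Equiv.apply_symm_apply, Equiv.apply_symm_apply]
  change ∏ i, A i (f i) (g i)
    = (∏ i : X, A i (f i) (g i)) * ∏ i : {i // i ∉ X}, A i (f i) (g i)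
  convert (Fintype.prod_subtype_mul_prod_subtype (· ∈ X) fun i => A i (f i) (g i)).symm

end PiKronecker

section PartialTrace

variable {R k l m n : Type*} [Fintype l]

/-- The partial trace over the second tensor factor, for matrices that may be rectangular in the
first; the marginals of a state are its partial traces along `splitEquiv`. -/
def partialTrace [AddCommMonoid R] (M : Matrix (k × l) (m × l) R) : Matrix k m R :=
  of fun i j => ∑ a, M (i, a) (j, a)

lemma trace_partialTrace [AddCommMonoid R] [Fintype k] (M : Matrix (k × l) (k × l) R) :
    (partialTrace M).trace = M.trace := by
  simp only [trace, diag_apply, partialTrace, of_apply, Fintype.sum_prod_type]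

lemma partialTrace_isHermitian [AddCommMonoid R] [StarAddMonoid R]
    {M : Matrix (k × l) (k × l) R} (hM : M.IsHermitian) : (partialTrace M).IsHermitian := by
  ext i j
  simp only [partialTrace, conjTranspose_apply, of_apply, star_sum, hM.apply]

lemma partialTrace_add [AddCommMonoid R] (M N : Matrix (k × l) (m × l) R) :
    partialTrace (M + N) = partialTrace M + partialTrace N := by
  ext i j
  exact Finset.sum_add_distrib

lemma partialTrace_smul {S : Type*} [AddCommMonoid R] [DistribSMul S R] (c : S)
    (M : Matrix (k × l) (m × l) R) : partialTrace (c • M) = c • partialTrace M := by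
  ext i j
  exact Finset.smul_sum.symm

lemma partialTrace_kronecker_one_mul [Semiring R] [DecidableEq l] [Fintype k] (A : Matrix n k R)
    (M : Matrix (k × l) (m × l) R) :
    partialTrace ((A ⊗ₖ (1 : Matrix l l R)) * M) = A * partialTrace M := by
  ext i j
  simp only [partialTrace, of_apply, mul_apply, Fintype.sum_prod_type, kronecker_apply, one_apply,
    mul_ite, mul_one, mul_zero, ite_mul, zero_mul, Finset.sum_ite_eq, Finset.mem_univ, if_true,
    Finset.mul_sum]
  exact Finset.sum_comm

lemma partialTrace_mul_kronecker_one [Semiring R] [DecidableEq l] [Fintype m]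
    (M : Matrix (k × l) (m × l) R) (A : Matrix m n R) :
    partialTrace (M * (A ⊗ₖ (1 : Matrix l l R))) = partialTrace M * A := by
  ext i j
  simp only [partialTrace, of_apply, mul_apply, Fintype.sum_prod_type, kronecker_apply, one_apply,
    mul_ite, mul_one, mul_zero, Finset.sum_ite_eq', Finset.mem_univ, if_true, Finset.sum_mul]
  exact Finset.sum_comm

lemma partialTrace_one_kronecker_mul_comm [CommSemiring R] {l' : Type*} [Fintype l'] [Fintype k]
    [Fintype m] [DecidableEq k] [DecidableEq m] (B : Matrix l l' R)
    (M : Matrix (k × l') (m × l) R) :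
    partialTrace (((1 : Matrix k k R) ⊗ₖ B) * M)
      = partialTrace (M * ((1 : Matrix m m R) ⊗ₖ B)) := by
  ext i j
  simp only [partialTrace, of_apply, mul_apply, Fintype.sum_prod_type, kronecker_apply, one_apply,
    mul_ite, ite_mul, one_mul, mul_zero, zero_mul, Finset.sum_ite_eq, Finset.sum_ite_eq',
    Finset.sum_ite_irrel, Finset.sum_const_zero, Finset.mem_univ, if_true]
  rw [Finset.sum_comm]
  simp only [mul_comm]

lemma partialTrace_kronecker_isometry_conj [CommSemiring R] [StarRing R] {l' : Type*} [Fintype l']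
    [DecidableEq l] [Fintype k] (A : Matrix m k R) {W : Matrix l' l R}
    (hW : Wᴴ * W = 1) (M : Matrix (k × l) (k × l) R) :
    partialTrace ((A ⊗ₖ W) * M * (A ⊗ₖ W)ᴴ) = A * partialTrace M * Aᴴ := by
  classical
  have hfactor : A ⊗ₖ W = (A ⊗ₖ (1 : Matrix l' l' R)) * ((1 : Matrix k k R) ⊗ₖ W) := by
    rw [← mul_kronecker_mul, Matrix.mul_one, Matrix.one_mul]
  calc partialTrace ((A ⊗ₖ W) * M * (A ⊗ₖ W)ᴴ)
      = partialTrace ((A ⊗ₖ (1 : Matrix l' l' R))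
          * (((1 : Matrix k k R) ⊗ₖ W) * (M * ((1 : Matrix k k R) ⊗ₖ Wᴴ)))
          * (Aᴴ ⊗ₖ (1 : Matrix l' l' R))) := by
        simp only [hfactor, conjTranspose_mul, conjTranspose_kronecker, conjTranspose_one,
          Matrix.mul_assoc]
    _ = A * partialTrace (((1 : Matrix k k R) ⊗ₖ W) * (M * ((1 : Matrix k k R) ⊗ₖ Wᴴ)))
          * Aᴴ := by
        rw [partialTrace_mul_kronecker_one, partialTrace_kronecker_one_mul]
    _ = A * partialTrace M * Aᴴ := by
        rw [partialTrace_one_kronecker_mul_comm, Matrix.mul_assoc M, ← mul_kronecker_mul, hW,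
          Matrix.one_mul, one_kronecker_one, Matrix.mul_one]

end PartialTrace

/-! ### Von Neumann entropy -/

section Entropy

variable {k l m : Type*} [Fintype k] [DecidableEq k] [Fintype l] [DecidableEq l] [Fintype m]
  [DecidableEq m]

lemma vNEntropy_eq_sum_negMulLog_eigenvalues {M : Matrix k k ℂ} (hM : M.IsHermitian) :
    vNEntropy M = (∑ i, Real.negMulLog (hM.eigenvalues i)) / Real.log 2 := by
  rw [vNEntropy, dif_pos hM, ← Finset.sum_neg_distrib, Finset.sum_div]
  refine Finset.sum_congr rfl fun i _ => ?_
  rw [Real.negMulLog, Real.logb]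
  ring

lemma vNEntropy_eq_sum_negMulLog_roots_charpoly {M : Matrix k k ℂ} (hM : M.IsHermitian) :
    vNEntropy M = (M.charpoly.roots.map fun z => Real.negMulLog z.re).sum / Real.log 2 := by
  rw [vNEntropy_eq_sum_negMulLog_eigenvalues hM, hM.roots_charpoly_eq_eigenvalues,
    Multiset.map_map]
  rfl

lemma vNEntropy_diagonal (x : k → ℝ) :
    vNEntropy (diagonal fun i => (x i : ℂ)) = (∑ i, Real.negMulLog (x i)) / Real.log 2 := by
  rw [vNEntropy_eq_sum_negMulLog_roots_charpoly (isHermitian_diagonal_ofReal x),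
    charpoly_diagonal, Polynomial.roots_prod _ _ (Polynomial.monic_prod_X_sub_C _ _).ne_zero]
  simp

lemma vNEntropy_one : vNEntropy (1 : Matrix k k ℂ) = 0 := by
  simpa using vNEntropy_diagonal fun _ : k => 1

lemma vNEntropy_submatrix_equiv (e : l ≃ k) {M : Matrix k k ℂ} (hM : M.IsHermitian) :
    vNEntropy (M.submatrix e e) = vNEntropy M := by
  rw [vNEntropy_eq_sum_negMulLog_roots_charpoly hM,
    vNEntropy_eq_sum_negMulLog_roots_charpoly (hM.submatrix e), ← charpoly_reindex e.symm M]
  rfl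

-- Conjugation by an isometry only multiplies the characteristic polynomial by a power of `X`,
-- and the eigenvalue `0` does not contribute to the entropy.
lemma vNEntropy_isometry_conj {W : Matrix m k ℂ} (hW : Wᴴ * W = 1) {M : Matrix k k ℂ}
    (hM : M.IsHermitian) : vNEntropy (W * M * Wᴴ) = vNEntropy M := by
  have hcharpoly : Polynomial.X ^ Fintype.card k * (W * M * Wᴴ).charpoly
      = Polynomial.X ^ Fintype.card m * M.charpoly := by
    rw [charpoly_mul_comm' (W * M) Wᴴ, ← Matrix.mul_assoc, hW, Matrix.one_mul]
  have hroots := congrArg (fun P => (P.roots.map fun z => Real.negMulLog z.re).sum) hcharpoly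
  rw [vNEntropy_eq_sum_negMulLog_roots_charpoly hM,
    vNEntropy_eq_sum_negMulLog_roots_charpoly (isHermitian_mul_mul_conjTranspose W hM)]
  congr 1
  simpa [Polynomial.roots_mul, (charpoly_monic _).ne_zero, Multiset.map_nsmul,
    Multiset.sum_nsmul] using hroots

lemma vNEntropy_fromBlocks_zero_zero {M : Matrix k k ℂ} {N : Matrix l l ℂ} (hM : M.IsHermitian)
    (hN : N.IsHermitian) : vNEntropy (fromBlocks M 0 0 N) = vNEntropy M + vNEntropy N := by
  rw [vNEntropy_eq_sum_negMulLog_roots_charpoly (hM.fromBlocks conjTranspose_zero hN),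
    charpoly_fromBlocks_zero₁₂,
    Polynomial.roots_mul (mul_ne_zero (charpoly_monic M).ne_zero (charpoly_monic N).ne_zero),
    Multiset.map_add, Multiset.sum_add, add_div,
    ← vNEntropy_eq_sum_negMulLog_roots_charpoly hM, ← vNEntropy_eq_sum_negMulLog_roots_charpoly hN]

lemma exists_isometry_conj_diagonal_eigenvalues {M : Matrix k k ℂ} (hM : M.IsHermitian) :
    ∃ U : Matrix k k ℂ, Uᴴ * U = 1 ∧ M = U * diagonal (fun i => (hM.eigenvalues i : ℂ)) * Uᴴ :=
  ⟨hM.eigenvectorUnitary, Unitary.coe_star_mul_self hM.eigenvectorUnitary,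
    hM.spectral_theorem.trans (Unitary.conjStarAlgAut_apply ..)⟩

lemma vNEntropy_isometry_conj_diagonal {W : Matrix m k ℂ} (hW : Wᴴ * W = 1) (x : k → ℝ) :
    vNEntropy (W * diagonal (fun i => (x i : ℂ)) * Wᴴ)
      = (∑ i, Real.negMulLog (x i)) / Real.log 2 := by
  rw [vNEntropy_isometry_conj hW (isHermitian_diagonal_ofReal x), vNEntropy_diagonal]

lemma re_trace_eq_sum_eigenvalues {M : Matrix k k ℂ} (hM : M.IsHermitian) :
    M.trace.re = ∑ i, hM.eigenvalues i := by
  simp [hM.trace_eq_sum_eigenvalues]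

lemma vNEntropy_smul (p : ℝ) {M : Matrix k k ℂ} (hM : M.IsHermitian) :
    vNEntropy ((p : ℂ) • M)
      = p * vNEntropy M + M.trace.re * (Real.negMulLog p / Real.log 2) := by
  obtain ⟨U, hU, hspec⟩ := exists_isometry_conj_diagonal_eigenvalues hM
  have hsmul : (p : ℂ) • M
      = U * diagonal (fun i => ((p * hM.eigenvalues i : ℝ) : ℂ)) * Uᴴ := by
    conv_lhs => rw [hspec, ← Matrix.smul_mul, ← Matrix.mul_smul, ← diagonal_smul]
    simp [Pi.smul_def]
  rw [hsmul, vNEntropy_isometry_conj_diagonal hU, vNEntropy_eq_sum_negMulLog_eigenvalues hM,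
    re_trace_eq_sum_eigenvalues hM]
  simp only [Real.negMulLog_mul, Finset.sum_add_distrib, ← Finset.mul_sum, ← Finset.sum_mul]
  ring

lemma vNEntropy_kronecker {M : Matrix k k ℂ} {N : Matrix l l ℂ} (hM : M.IsHermitian)
    (hN : N.IsHermitian) :
    vNEntropy (M ⊗ₖ N) = N.trace.re * vNEntropy M + M.trace.re * vNEntropy N := by
  obtain ⟨U, hU, hspecM⟩ := exists_isometry_conj_diagonal_eigenvalues hM
  obtain ⟨V, hV, hspecN⟩ := exists_isometry_conj_diagonal_eigenvalues hN
  have hspec : M ⊗ₖ N = (U ⊗ₖ V)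
      * diagonal (fun i : k × l => ((hM.eigenvalues i.1 * hN.eigenvalues i.2 : ℝ) : ℂ))
      * (U ⊗ₖ V)ᴴ := by
    conv_lhs => rw [hspecM, hspecN, mul_kronecker_mul, mul_kronecker_mul,
      diagonal_kronecker_diagonal, ← conjTranspose_kronecker]
    simp only [Complex.ofReal_mul]
  rw [hspec, vNEntropy_isometry_conj_diagonal (kronecker_isometry hU hV), Fintype.sum_prod_type,
    vNEntropy_eq_sum_negMulLog_eigenvalues hM, vNEntropy_eq_sum_negMulLog_eigenvalues hN,
    re_trace_eq_sum_eigenvalues hM, re_trace_eq_sum_eigenvalues hN]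
  simp only [Real.negMulLog_mul, Finset.sum_add_distrib, ← Finset.mul_sum, ← Finset.sum_mul]
  ring

lemma vNEntropy_orthogonal_add {V : Matrix m k ℂ} {W : Matrix m l ℂ} (hV : Vᴴ * V = 1)
    (hW : Wᴴ * W = 1) (hVW : Vᴴ * W = 0) {M : Matrix k k ℂ} {N : Matrix l l ℂ}
    (hM : M.IsHermitian) (hN : N.IsHermitian) :
    vNEntropy (V * M * Vᴴ + W * N * Wᴴ) = vNEntropy M + vNEntropy N := by
  have hblocks : V * M * Vᴴ + W * N * Wᴴ
      = fromCols V W * fromBlocks M 0 0 N * (fromCols V W)ᴴ := by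
    rw [conjTranspose_fromCols_eq_fromRows_conjTranspose, fromCols_mul_fromBlocks,
      fromCols_mul_fromRows]
    simp
  rw [hblocks, vNEntropy_isometry_conj (fromCols_isometry hV hW hVW)
    (hM.fromBlocks conjTranspose_zero hN), vNEntropy_fromBlocks_zero_zero hM hN]

lemma vNEntropy_orthogonal_mixture {V : Matrix m k ℂ} {W : Matrix m l ℂ} (hV : Vᴴ * V = 1)
    (hW : Wᴴ * W = 1) (hVW : Vᴴ * W = 0) {M : Matrix k k ℂ} {N : Matrix l l ℂ}
    (hM : M.IsHermitian) (hN : N.IsHermitian) (hM₁ : M.trace = 1) (hN₁ : N.trace = 1) (p : ℝ) :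
    vNEntropy (V * ((p : ℂ) • M) * Vᴴ + W * (((1 - p : ℝ) : ℂ) • N) * Wᴴ)
      = p * vNEntropy M + (1 - p) * vNEntropy N + Real.binEntropy p / Real.log 2 := by
  rw [vNEntropy_orthogonal_add hV hW hVW (hM.smul (Complex.conj_ofReal p))
    (hN.smul (Complex.conj_ofReal (1 - p))), vNEntropy_smul p hM,
    vNEntropy_smul (1 - p) hN, hM₁, hN₁, Real.binEntropy_eq_negMulLog_add_negMulLog_one_sub]
  simp only [Complex.one_re]
  ring

end Entropy

/-! ### Marginals of multipartite states -/

section Marginal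

variable {n : ℕ} {d d' : Fin n → ℕ}

lemma marginal_eq_partialTrace (X : Finset (Fin n))
    (ρ : Matrix (∀ i, Fin (d i)) (∀ i, Fin (d i)) ℂ) :
    marginal X ρ = partialTrace
      (ρ.submatrix (splitEquiv X fun i => Fin (d i)) (splitEquiv X fun i => Fin (d i))) :=
  rfl

lemma marginal_isHermitian (X : Finset (Fin n))
    {ρ : Matrix (∀ i, Fin (d i)) (∀ i, Fin (d i)) ℂ} (hρ : ρ.IsHermitian) :
    (marginal X ρ).IsHermitian := by
  rw [marginal_eq_partialTrace]
  exact partialTrace_isHermitian (hρ.submatrix _)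

lemma trace_marginal (X : Finset (Fin n)) (ρ : Matrix (∀ i, Fin (d i)) (∀ i, Fin (d i)) ℂ) :
    (marginal X ρ).trace = ρ.trace := by
  rw [marginal_eq_partialTrace, trace_partialTrace, trace_submatrix_equiv]

lemma marginal_add (X : Finset (Fin n)) (ρ σ : Matrix (∀ i, Fin (d i)) (∀ i, Fin (d i)) ℂ) :
    marginal X (ρ + σ) = marginal X ρ + marginal X σ := by
  simp only [marginal_eq_partialTrace, submatrix_add, Pi.add_apply, partialTrace_add]

lemma marginal_smul (X : Finset (Fin n)) (c : ℂ)
    (ρ : Matrix (∀ i, Fin (d i)) (∀ i, Fin (d i)) ℂ) :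
    marginal X (c • ρ) = c • marginal X ρ := by
  simp only [marginal_eq_partialTrace, submatrix_smul, Pi.smul_apply, partialTrace_smul]

lemma marginal_piKronecker_isometry_conj (X : Finset (Fin n))
    {W : ∀ i, Matrix (Fin (d' i)) (Fin (d i)) ℂ} (hW : ∀ i, (W i)ᴴ * W i = 1)
    (ρ : Matrix (∀ i, Fin (d i)) (∀ i, Fin (d i)) ℂ) :
    marginal X (piKronecker W * ρ * (piKronecker W)ᴴ)
      = piKronecker (fun i : X => W i) * marginal X ρ * (piKronecker fun i : X => W i)ᴴ := by
  simp only [marginal_eq_partialTrace]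
  rw [← submatrix_mul_equiv _ _ _ (splitEquiv X _), ← submatrix_mul_equiv _ _ _ (splitEquiv X _),
    ← conjTranspose_submatrix, piKronecker_submatrix_splitEquiv,
    partialTrace_kronecker_isometry_conj _ (piKronecker_isometry fun i : {i // i ∉ X} => hW i)]

/-- The identification of a family of composite local indices, each ranging over `d i * d' i`
values, with a pair of families of local indices. -/
def piFinMulEquiv {ι : Type*} (d d' : ι → ℕ) :
    (∀ i, Fin (d i * d' i)) ≃ (∀ i, Fin (d i)) × (∀ i, Fin (d' i)) :=
  (Equiv.piCongrRight fun _ => finProdFinEquiv.symm).trans (Equiv.arrowProdEquivProdArrow _ _ _)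

/-- The tensor product of two `n`-partite matrices, the `i`-th party holding the `i`-th tensor
factors of both. -/
def partyKronecker (ρ : Matrix (∀ i, Fin (d i)) (∀ i, Fin (d i)) ℂ)
    (σ : Matrix (∀ i, Fin (d' i)) (∀ i, Fin (d' i)) ℂ) :
    Matrix (∀ i, Fin (d i * d' i)) (∀ i, Fin (d i * d' i)) ℂ :=
  (ρ ⊗ₖ σ).submatrix (piFinMulEquiv d d') (piFinMulEquiv d d')

lemma piFinMulEquiv_splitEquiv (X : Finset (Fin n)) (f : ∀ i : X, Fin (d i * d' i))
    (g : ∀ i : {i // i ∉ X}, Fin (d i * d' i)) :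
    piFinMulEquiv d d' (splitEquiv X _ (f, g))
      = (splitEquiv X _ ((piFinMulEquiv _ _ f).1, (piFinMulEquiv _ _ g).1),
        splitEquiv X _ ((piFinMulEquiv _ _ f).2, (piFinMulEquiv _ _ g).2)) := by
  ext i <;> by_cases hi : i ∈ X <;>
    simp [piFinMulEquiv, splitEquiv, Equiv.arrowProdEquivProdArrow, hi]

lemma marginal_partyKronecker (X : Finset (Fin n))
    (ρ : Matrix (∀ i, Fin (d i)) (∀ i, Fin (d i)) ℂ)
    (σ : Matrix (∀ i, Fin (d' i)) (∀ i, Fin (d' i)) ℂ) :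
    marginal X (partyKronecker ρ σ)
      = (marginal X ρ ⊗ₖ marginal X σ).submatrix (piFinMulEquiv _ _) (piFinMulEquiv _ _) := by
  ext f f'
  simp only [marginal_eq_partialTrace, partialTrace, partyKronecker, of_apply, submatrix_apply,
    kroneckerMap_apply, piFinMulEquiv_splitEquiv]
  rw [Finset.sum_mul_sum, ← Fintype.sum_prod_type']
  exact Fintype.sum_equiv (piFinMulEquiv _ _) _ _ fun _ => rfl

end Marginal

/-! ### Operations on entropy vectors -/

section EntropyVector

variable {n : ℕ} {d d' e : Fin n → ℕ} {ρ : Matrix (∀ i, Fin (d i)) (∀ i, Fin (d i)) ℂ}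
  {σ : Matrix (∀ i, Fin (d' i)) (∀ i, Fin (d' i)) ℂ}

lemma entropyVector_partyKronecker (hρ : ρ.IsHermitian) (hσ : σ.IsHermitian)
    (hρ₁ : ρ.trace = 1) (hσ₁ : σ.trace = 1) :
    entropyVector (partyKronecker ρ σ) = entropyVector ρ + entropyVector σ := by
  funext X
  have hρX := marginal_isHermitian X.1 hρ
  have hσX := marginal_isHermitian X.1 hσ
  simp only [Pi.add_apply, entropyVector]
  rw [marginal_partyKronecker, vNEntropy_submatrix_equiv _ (isHermitian_kronecker hρX hσX),
    vNEntropy_kronecker hρX hσX, trace_marginal, trace_marginal, hρ₁, hσ₁]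
  simp only [Complex.one_re, one_mul]

-- The ranges of `⨂ i ∈ X, V i` and `⨂ i ∈ X, W i` are orthogonal because `X` is nonempty.
lemma entropyVector_locally_orthogonal_mixture {V : ∀ i, Matrix (Fin (e i)) (Fin (d i)) ℂ}
    {W : ∀ i, Matrix (Fin (e i)) (Fin (d' i)) ℂ} (hV : ∀ i, (V i)ᴴ * V i = 1)
    (hW : ∀ i, (W i)ᴴ * W i = 1) (hVW : ∀ i, (V i)ᴴ * W i = 0) (hρ : ρ.IsHermitian)
    (hσ : σ.IsHermitian) (hρ₁ : ρ.trace = 1) (hσ₁ : σ.trace = 1) (p : ℝ) :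
    entropyVector (piKronecker V * ((p : ℂ) • ρ) * (piKronecker V)ᴴ
        + piKronecker W * (((1 - p : ℝ) : ℂ) • σ) * (piKronecker W)ᴴ)
      = p • entropyVector ρ + (1 - p) • entropyVector σ
        + Function.const _ (Real.binEntropy p / Real.log 2) := by
  funext X
  have : Nonempty X.1 := X.2.to_subtype
  simp only [Pi.add_apply, Pi.smul_apply, smul_eq_mul, Function.const_apply, entropyVector]
  rw [marginal_add, marginal_piKronecker_isometry_conj X.1 hV,
    marginal_piKronecker_isometry_conj X.1 hW, marginal_smul, marginal_smul,
    vNEntropy_orthogonal_mixture (piKronecker_isometry fun i : X.1 => hV i)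
      (piKronecker_isometry fun i : X.1 => hW i) (piKronecker_orthogonal fun i : X.1 => hVW i)
      (marginal_isHermitian X.1 hρ) (marginal_isHermitian X.1 hσ)
      (by rw [trace_marginal, hρ₁]) (by rw [trace_marginal, hσ₁])]

lemma zero_mem_entropyVectors : 0 ∈ entropyVectors n := by
  refine ⟨fun _ => 1, 1, PosSemidef.one, by simp, funext fun X => ?_⟩
  have hmarginal : marginal X.1 (1 : Matrix (∀ _ : Fin n, Fin 1) (∀ _ : Fin n, Fin 1) ℂ) = 1 := by
    ext f f'
    obtain rfl := Subsingleton.elim f f'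
    simp [marginal]
  rw [entropyVector, hmarginal, vNEntropy_one, Pi.zero_apply]

variable {v w : {X : Finset (Fin n) // X.Nonempty} → ℝ}

lemma add_mem_entropyVectors (hv : v ∈ entropyVectors n) (hw : w ∈ entropyVectors n) :
    v + w ∈ entropyVectors n := by
  obtain ⟨d, ρ, hρ, hρ₁, rfl⟩ := hv
  obtain ⟨d', σ, hσ, hσ₁, rfl⟩ := hw
  refine ⟨fun i => d i * d' i, partyKronecker ρ σ, (hρ.kronecker hσ).submatrix _, ?_,
    (entropyVector_partyKronecker hρ.isHermitian hσ.isHermitian hρ₁ hσ₁).symm⟩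
  rw [partyKronecker, trace_submatrix_equiv, trace_kronecker, hρ₁, hσ₁, mul_one]

lemma mixture_mem_entropyVectors (hv : v ∈ entropyVectors n) (hw : w ∈ entropyVectors n) {p : ℝ}
    (hp : p ∈ Set.Icc 0 1) :
    p • v + (1 - p) • w + Function.const _ (Real.binEntropy p / Real.log 2)
      ∈ entropyVectors n := by
  obtain ⟨d, ρ, hρ, hρ₁, rfl⟩ := hv
  obtain ⟨d', σ, hσ, hσ₁, rfl⟩ := hw
  choose V W hV hW hVW using fun i => exists_orthogonal_isometries_fin_add (R := ℂ) (d i) (d' i)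
  refine ⟨fun i => d i + d' i, piKronecker V * ((p : ℂ) • ρ) * (piKronecker V)ᴴ
    + piKronecker W * (((1 - p : ℝ) : ℂ) • σ) * (piKronecker W)ᴴ, ?_, ?_,
    (entropyVector_locally_orthogonal_mixture hV hW hVW hρ.isHermitian hσ.isHermitian
      hρ₁ hσ₁ p).symm⟩
  · have hpρ := hρ.smul (Complex.zero_le_real.2 hp.1)
    have hqσ := hσ.smul (Complex.zero_le_real.2 (sub_nonneg.2 hp.2))
    exact (hpρ.mul_mul_conjTranspose_same _).add (hqσ.mul_mul_conjTranspose_same _)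
  · rw [trace_add, trace_isometry_conj (piKronecker_isometry hV),
      trace_isometry_conj (piKronecker_isometry hW), trace_smul, trace_smul, hρ₁, hσ₁]
    simp

/-- The additive monoid formed by the entropy vectors of `n`-partite states. -/
def entropyVectorMonoid (n : ℕ) : AddSubmonoid ({X : Finset (Fin n) // X.Nonempty} → ℝ) where
  carrier := entropyVectors n
  add_mem' := add_mem_entropyVectors
  zero_mem' := zero_mem_entropyVectors

end EntropyVector

-- `c • v` is the limit of `p • (⌊c / p⌋ • v) + h p` along `p = 1 / m`, `m → ∞`.
lemma smul_mem_topologicalClosure_of_smul_add_mem {E : Type*} [AddCommGroup E] [Module ℝ E]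
    [TopologicalSpace E] [ContinuousAdd E] [ContinuousSMul ℝ E] {S : AddSubmonoid E} {h : ℝ → E}
    (hh : Tendsto h (𝓝 0) (𝓝 0)) (hS : ∀ v ∈ S, ∀ p ∈ Set.Icc (0 : ℝ) 1, p • v + h p ∈ S)
    {c : ℝ} (hc : 0 ≤ c) {v : E} (hv : v ∈ S.topologicalClosure) :
    c • v ∈ S.topologicalClosure := by
  refine S.isClosed_topologicalClosure.closure_subset
    (map_mem_closure (continuous_const_smul c) hv fun u hu => ?_)
  have hfloor : Tendsto (fun m : ℕ => (m : ℝ)⁻¹ * ⌊c * m⌋₊) atTop (𝓝 c) := by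
    simpa only [Function.comp_def, div_eq_inv_mul] using
      (tendsto_nat_floor_mul_div_atTop hc).comp (tendsto_natCast_atTop_atTop (R := ℝ))
  have hlim : Tendsto (fun m : ℕ => (m : ℝ)⁻¹ • ⌊c * m⌋₊ • u + h (m : ℝ)⁻¹) atTop
      (𝓝 (c • u)) := by
    have := (hfloor.smul_const u).add (hh.comp tendsto_inv_atTop_nhds_zero_nat)
    simpa only [add_zero, mul_smul, Nat.cast_smul_eq_nsmul, Function.comp_def] using this
  exact mem_closure_of_tendsto hlim (Eventually.of_forall fun m =>
    hS _ (S.nsmul_mem hu _) _ ⟨by positivity, Nat.cast_inv_le_one m⟩)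

lemma tendsto_const_binEntropy_div_log_two (ι : Type*) :
    Tendsto (fun p => Function.const ι (Real.binEntropy p / Real.log 2)) (𝓝 0) (𝓝 0) := by
  have hcont : Continuous fun p => Function.const ι (Real.binEntropy p / Real.log 2) :=
    continuous_pi fun _ => Real.binEntropy_continuous.div_const _
  simpa [Function.const_zero] using hcont.tendsto 0

/-- **The quantum entropy cone.** For each `n`, the topological closure of the set of
entropy vectors of `n`-partite states is a convex cone in `ℝ^{2ⁿ-1}`: it is closed
under addition and under multiplication by nonnegative real scalars. -/
theorem entropy_cone_is_convex_cone (n : ℕ) :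
    (∀ v w, v ∈ closure (entropyVectors n) → w ∈ closure (entropyVectors n) →
      v + w ∈ closure (entropyVectors n)) ∧
    (∀ (c : ℝ) v, 0 ≤ c → v ∈ closure (entropyVectors n) →
      c • v ∈ closure (entropyVectors n)) := by
  refine ⟨fun v w hv hw => (entropyVectorMonoid n).topologicalClosure.add_mem hv hw,
    fun c v hc hv => ?_⟩
  have hmix : ∀ u ∈ entropyVectorMonoid n, ∀ p ∈ Set.Icc (0 : ℝ) 1,
      p • u + Function.const _ (Real.binEntropy p / Real.log 2) ∈ entropyVectorMonoid n := by
    intro u hu p hp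
    have hmem := mixture_mem_entropyVectors hu zero_mem_entropyVectors hp
    rwa [smul_zero, add_zero] at hmem
  exact smul_mem_topologicalClosure_of_smul_add_mem (tendsto_const_binEntropy_div_log_two _)
    hmix hc hv
end
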